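/- For every integer s, the ℂ-linear map π_s : ĝ → ĝ determined by π_s(e(n)) = e(n−s), π_s(f(n)) = f(n+s), π_s(h(n)) = h(n) − s·δ_{n,0}·c (for all n ∈ ℤ), and π_s(c) = c, is an automorphism of the Lie algebra ĝ. -/

import Mathlib

/-!
All assertions are additive in each argument, so they reduce to generators of ĝ: elements x ⊗ tⁿ
and multiples of c for the Lie algebra axioms, and multiples of e(n), h(n), f(n), c for π_s
(`aff_induction`). On the elements x ⊗ tⁿ the Jacobi identity is that of sl₂ together with
invariance of the trace form. The map π_{-s} is a two-sided inverse of π_s. For compatibility with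
the bracket the only pair of generators with content is e(n), f(m) (`piS_bracket_EF`): the
cocycle value changes from n to n - s, which is what the correction -s·c in π_s(h(0)) supplies.
-/

noncomputable section

/- 𝔤 = sl₂(ℂ), written in coordinates with respect to the standard basis e, h, f:
   an element (a, b, c) stands for a·e + b·h + c·f. -/

/-- sl₂(ℂ) in coordinates (e-, h-, f-components). -/
abbrev sl2 : Type := ℂ × ℂ × ℂ

/-- The bracket of sl₂(ℂ) determined by [h,e] = 2e, [h,f] = −2f, [e,f] = h. -/
def sl2Bracket (x y : sl2) : sl2 :=
  (2 * (x.2.1 * y.1 - x.1 * y.2.1),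
   x.1 * y.2.2 - x.2.2 * y.1,
   2 * (x.2.2 * y.2.1 - x.2.1 * y.2.2))

/-- The trace form (x|y) = tr(xy) of sl₂(ℂ): (e|f) = (f|e) = 1, (h|h) = 2,
    all other pairings of basis elements vanish. -/
def sl2Form (x y : sl2) : ℂ := x.1 * y.2.2 + x.2.2 * y.1 + 2 * x.2.1 * y.2.1

/- The affine Lie algebra ĝ = (𝔤 ⊗ ℂ[t,t⁻¹]) ⊕ ℂc, with 𝔤 ⊗ ℂ[t,t⁻¹] realized
   as finitely supported functions ℤ →₀ 𝔤 (the degree-n coefficient of x ⊗ tⁿ). -/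

/-- The underlying ℂ-vector space of ĝ = (𝔤 ⊗ ℂ[t,t⁻¹]) ⊕ ℂc. -/
abbrev Aff : Type := (ℤ →₀ sl2) × ℂ

/-- The bracket of ĝ:
    [x⊗tⁿ, y⊗tᵐ] = [x,y]⊗tⁿ⁺ᵐ + n·(x|y)·δ_{n+m,0}·c, with c central. -/
def affBracket (x y : Aff) : Aff :=
  (x.1.sum fun n xn => y.1.sum fun m ym => Finsupp.single (n + m) (sl2Bracket xn ym),
   x.1.sum fun n xn => y.1.sum fun m ym =>
     if n + m = 0 then (n : ℂ) * sl2Form xn ym else 0)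

/-- The element e(n) = e ⊗ tⁿ of ĝ. -/
def atE (n : ℤ) : Aff := (Finsupp.single n (1, 0, 0), 0)

/-- The element h(n) = h ⊗ tⁿ of ĝ. -/
def atH (n : ℤ) : Aff := (Finsupp.single n (0, 1, 0), 0)

/-- The element f(n) = f ⊗ tⁿ of ĝ. -/
def atF (n : ℤ) : Aff := (Finsupp.single n (0, 0, 1), 0)

/-- The canonical central element c of ĝ. -/
def cc : Aff := (0, 1)

/-- The map π_s : ĝ → ĝ, given on x ⊗ tⁿ + a·c by shifting the e-component down by s,
    shifting the f-component up by s, keeping the h-component, and adding the central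
    correction −s·(h-coefficient in degree 0)·c; so π_s(e(n)) = e(n−s),
    π_s(f(n)) = f(n+s), π_s(h(n)) = h(n) − s·δ_{n,0}·c, π_s(c) = c. -/
def piS (s : ℤ) (x : Aff) : Aff :=
  (Finsupp.mapDomain (fun n => n - s) (x.1.mapRange (fun v => (v.1, 0, 0)) rfl)
     + x.1.mapRange (fun v => ((0 : ℂ), v.2.1, 0)) rfl
     + Finsupp.mapDomain (fun n => n + s) (x.1.mapRange (fun v => ((0 : ℂ), 0, v.2.2)) rfl),
   x.2 - s * (x.1 0).2.1)

/-- The element (a·e + b·h + d·f) ⊗ tⁿ is the sum of its three components, so a property closed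
under addition holds on ĝ as soon as it holds on scalar multiples of e(n), h(n), f(n) and c. -/
theorem aff_induction {P : Aff → Prop} (hadd : ∀ x y, P x → P y → P (x + y))
    (hE : ∀ (n : ℤ) (a : ℂ), P (Finsupp.single n (a, 0, 0), 0))
    (hH : ∀ (n : ℤ) (a : ℂ), P (Finsupp.single n (0, a, 0), 0))
    (hF : ∀ (n : ℤ) (a : ℂ), P (Finsupp.single n (0, 0, a), 0))
    (hC : ∀ a : ℂ, P (0, a)) (x : Aff) : P x := by
  obtain ⟨p, a⟩ := x
  have h1 : P (p, 0) := by
    induction p using Finsupp.induction_linear with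
    | zero => exact hC 0
    | add p q hp hq => simpa using hadd _ _ hp hq
    | single n v =>
      obtain ⟨a, b, d⟩ := v
      have := hadd _ _ (hadd _ _ (hE n a) (hH n b)) (hF n d)
      simpa [← Finsupp.single_add] using this
  simpa using hadd _ _ h1 (hC a)

theorem sl2Bracket_zero_left (y : sl2) : sl2Bracket 0 y = 0 := by simp [sl2Bracket]

theorem sl2Bracket_zero_right (x : sl2) : sl2Bracket x 0 = 0 := by simp [sl2Bracket]

theorem sl2Form_zero_left (y : sl2) : sl2Form 0 y = 0 := by simp [sl2Form]

theorem sl2Form_zero_right (x : sl2) : sl2Form x 0 = 0 := by simp [sl2Form]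

theorem sl2Bracket_add_left (x y z : sl2) :
    sl2Bracket (x + y) z = sl2Bracket x z + sl2Bracket y z := by
  ext <;> simp [sl2Bracket] <;> ring

theorem sl2Bracket_add_right (x y z : sl2) :
    sl2Bracket x (y + z) = sl2Bracket x y + sl2Bracket x z := by
  ext <;> simp [sl2Bracket] <;> ring

theorem sl2Form_add_left (x y z : sl2) : sl2Form (x + y) z = sl2Form x z + sl2Form y z := by
  simp [sl2Form]; ring

theorem sl2Form_add_right (x y z : sl2) : sl2Form x (y + z) = sl2Form x y + sl2Form x z := by
  simp [sl2Form]; ring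

theorem affBracket_add_left (x y z : Aff) :
    affBracket (x + y) z = affBracket x z + affBracket y z := by
  refine Prod.ext ?_ ?_
  · simp only [affBracket, Prod.fst_add]
    refine Finsupp.sum_add_index' (fun n => ?_) (fun n v w => ?_)
    · simp [sl2Bracket_zero_left]
    · simp [sl2Bracket_add_left, Finsupp.single_add, Finsupp.sum_add]
  · simp only [affBracket, Prod.fst_add, Prod.snd_add]
    refine Finsupp.sum_add_index' (fun n => ?_) (fun n v w => ?_)
    · simp [sl2Form_zero_left]
    · rw [← Finsupp.sum_add]
      refine Finsupp.sum_congr fun m _ => ?_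
      split_ifs <;> simp [sl2Form_add_left, mul_add]

theorem affBracket_add_right (x y z : Aff) :
    affBracket x (y + z) = affBracket x y + affBracket x z := by
  refine Prod.ext ?_ ?_
  · simp only [affBracket, Prod.fst_add]
    rw [← Finsupp.sum_add]
    refine Finsupp.sum_congr fun n _ => ?_
    refine Finsupp.sum_add_index' (fun m => ?_) (fun m v w => ?_)
    · simp [sl2Bracket_zero_right]
    · simp [sl2Bracket_add_right, Finsupp.single_add]
  · simp only [affBracket, Prod.fst_add, Prod.snd_add]
    rw [← Finsupp.sum_add]
    refine Finsupp.sum_congr fun n _ => ?_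
    refine Finsupp.sum_add_index' (fun m => ?_) (fun m v w => ?_)
    · simp [sl2Form_zero_right]
    · split_ifs <;> simp [sl2Form_add_right, mul_add]

theorem affBracket_single (n m : ℤ) (v w : sl2) (a b : ℂ) :
    affBracket (Finsupp.single n v, a) (Finsupp.single m w, b) =
      (Finsupp.single (n + m) (sl2Bracket v w),
        if n + m = 0 then (n : ℂ) * sl2Form v w else 0) := by
  simp [affBracket, sl2Bracket_zero_left, sl2Bracket_zero_right, sl2Form_zero_left,
    sl2Form_zero_right]

theorem affBracket_central_left (a : ℂ) (y : Aff) : affBracket (0, a) y = 0 := by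
  simp [affBracket]

theorem affBracket_central_right (a : ℂ) (x : Aff) : affBracket x (0, a) = 0 := by
  simp [affBracket]

/-- A property closed under addition holds on ĝ as soon as it holds on all x ⊗ tⁿ and all
multiples of c. -/
theorem aff_induction_single {P : Aff → Prop} (hadd : ∀ x y, P x → P y → P (x + y))
    (hS : ∀ (n : ℤ) (v : sl2), P (Finsupp.single n v, 0)) (hC : ∀ a : ℂ, P (0, a)) (x : Aff) :
    P x :=
  aff_induction hadd (fun n _ => hS n _) (fun n _ => hS n _) (fun n _ => hS n _) hC x

theorem affBracket_skew (x y : Aff) : affBracket x y = -affBracket y x := by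
  induction x using aff_induction_single with
  | hadd x x' h h' => rw [affBracket_add_left, affBracket_add_right, h, h', neg_add]
  | hC a => simp [affBracket_central_left, affBracket_central_right]
  | hS n v =>
    induction y using aff_induction_single with
    | hadd y y' h h' => rw [affBracket_add_left, affBracket_add_right, h, h', neg_add]
    | hC a => simp [affBracket_central_left, affBracket_central_right]
    | hS m w =>
      rw [affBracket_single, affBracket_single, add_comm m n]
      refine Prod.ext ?_ ?_
      · simp only [Prod.fst_neg, ← Finsupp.single_neg]
        congr 1
        ext <;> simp [sl2Bracket] <;> ring
      · simp only [Prod.snd_neg]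
        split_ifs with h
        · obtain rfl : m = -n := by lia
          simp only [sl2Form]
          push_cast
          ring
        · simp

theorem affBracket_self (x : Aff) : affBracket x x = 0 :=
  self_eq_neg.mp (affBracket_skew x x)

theorem affBracket_smul_left (a : ℂ) (x y : Aff) :
    affBracket (a • x) y = a • affBracket x y := by
  induction x using aff_induction_single with
  | hadd x x' h h' => simp only [smul_add, affBracket_add_left, h, h']
  | hC b =>
    rw [Prod.smul_mk, smul_zero, affBracket_central_left, affBracket_central_left, smul_zero]
  | hS n v =>
    induction y using aff_induction_single with
    | hadd y y' h h' => simp only [smul_add, affBracket_add_right, h, h']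
    | hC b => rw [affBracket_central_right, affBracket_central_right, smul_zero]
    | hS m w =>
      rw [Prod.smul_mk, Finsupp.smul_single, affBracket_single, affBracket_single,
        Prod.smul_mk a (Finsupp.single _ _), Finsupp.smul_single]
      refine Prod.ext ?_ ?_
      · dsimp only
        congr 1
        ext <;> simp [sl2Bracket] <;> ring
      · dsimp only
        split_ifs
        · simp [sl2Form]; ring
        · simp

theorem affBracket_smul_right (a : ℂ) (x y : Aff) :
    affBracket x (a • y) = a • affBracket x y := by
  rw [affBracket_skew, affBracket_smul_left, affBracket_skew x y, smul_neg]

theorem affBracket_jacobi (x y z : Aff) :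
    affBracket x (affBracket y z)
      = affBracket (affBracket x y) z + affBracket y (affBracket x z) := by
  have h0l (y : Aff) : affBracket 0 y = 0 := affBracket_central_left 0 y
  have h0r (x : Aff) : affBracket x 0 = 0 := affBracket_central_right 0 x
  induction x using aff_induction_single with
  | hadd x x' h h' =>
    simp only [affBracket_add_left, affBracket_add_right, h, h']; abel
  | hC a => simp [affBracket_central_left, h0l, h0r]
  | hS n u =>
  induction y using aff_induction_single with
  | hadd x x' h h' =>
    simp only [affBracket_add_left, affBracket_add_right, h, h']; abel
  | hC a => simp [affBracket_central_left, affBracket_central_right, h0l, h0r]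
  | hS m v =>
  induction z using aff_induction_single with
  | hadd x x' h h' =>
    simp only [affBracket_add_right, h, h']; abel
  | hC a => simp [affBracket_central_right, h0r]
  | hS k w =>
  simp only [affBracket_single]
  rw [Prod.mk_add_mk, ← add_assoc n m k, add_left_comm m n k, ← add_assoc n m k,
    ← Finsupp.single_add]
  refine Prod.ext ?_ ?_
  · dsimp only
    congr 1
    ext <;> simp [sl2Bracket] <;> ring
  · dsimp only
    split_ifs with h
    · -- invariance of the form: (u|[v,w]) = ([u,v]|w), and (v|[u,w]) = -([u,v]|w)
      simp [sl2Form, sl2Bracket]; ring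
    · simp

theorem piS_add (s : ℤ) (x y : Aff) : piS s (x + y) = piS s x + piS s y := by
  refine Prod.ext ?_ ?_
  · simp only [piS, Prod.fst_add]
    rw [Finsupp.mapRange_add (by simp), Finsupp.mapRange_add (by simp),
      Finsupp.mapRange_add (by simp), Finsupp.mapDomain_add, Finsupp.mapDomain_add]
    abel
  · simp [piS]; ring

theorem piS_E (s n : ℤ) (a : ℂ) :
    piS s (Finsupp.single n (a, 0, 0), 0) = (Finsupp.single (n - s) (a, 0, 0), 0) := by
  have : ((Finsupp.single n ((a, 0, 0) : sl2)) 0).2.1 = 0 := by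
    rw [Finsupp.single_apply]; split_ifs <;> rfl
  simp only [piS, this]
  simp [Finsupp.mapDomain_single, ← Prod.zero_eq_mk]

theorem piS_F (s n : ℤ) (a : ℂ) :
    piS s (Finsupp.single n (0, 0, a), 0) = (Finsupp.single (n + s) (0, 0, a), 0) := by
  have : ((Finsupp.single n ((0, 0, a) : sl2)) 0).2.1 = 0 := by
    rw [Finsupp.single_apply]; split_ifs <;> rfl
  simp only [piS, this]
  simp [Finsupp.mapDomain_single, ← Prod.zero_eq_mk]

theorem piS_H (s n : ℤ) (a : ℂ) :
    piS s (Finsupp.single n (0, a, 0), 0)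
      = (Finsupp.single n (0, a, 0), if n = 0 then -(s * a) else 0) := by
  have : ((Finsupp.single n ((0, a, 0) : sl2)) 0).2.1 = if n = 0 then a else 0 := by
    rw [Finsupp.single_apply]; split_ifs <;> rfl
  simp only [piS, this]
  split_ifs <;> simp [← Prod.zero_eq_mk]

theorem piS_C (s : ℤ) (a : ℂ) : piS s (0, a) = (0, a) := by
  simp [piS]

theorem piS_H' (s n : ℤ) (a b : ℂ) :
    piS s (Finsupp.single n (0, a, 0), b)
      = (Finsupp.single n (0, a, 0), b + if n = 0 then -(s * a) else 0) := by
  have : ((Finsupp.single n (0, a, 0), b) : Aff) = (Finsupp.single n (0, a, 0), 0) + (0, b) := by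
    simp
  rw [this, piS_add, piS_H, piS_C]
  simp [add_comm]

theorem piS_smul (s : ℤ) (a : ℂ) (x : Aff) : piS s (a • x) = a • piS s x := by
  induction x using aff_induction with
  | hadd x y hx hy => rw [smul_add, piS_add, piS_add, hx, hy, smul_add]
  | hE n b =>
    simp only [Prod.smul_mk, Finsupp.smul_single, smul_zero, piS_E]
  | hH n b =>
    simp only [Prod.smul_mk, Finsupp.smul_single, piS_H, smul_eq_mul, mul_ite,
      mul_zero, mul_neg, mul_left_comm]
  | hF n b =>
    simp only [Prod.smul_mk, Finsupp.smul_single, smul_zero, piS_F]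
  | hC b => simp [piS_C]

theorem piS_neg_piS (s : ℤ) (x : Aff) : piS (-s) (piS s x) = x := by
  induction x using aff_induction with
  | hadd x y hx hy => rw [piS_add, piS_add, hx, hy]
  | hE n b => simp [piS_E]
  | hH n b =>
    rw [piS_H, piS_H']
    split_ifs <;> simp
  | hF n b => simp [piS_F]
  | hC b => simp [piS_C]

theorem piS_bijective (s : ℤ) : Function.Bijective (piS s) :=
  Function.bijective_iff_has_inverse.mpr
    ⟨piS (-s), piS_neg_piS s, fun x => by simpa using piS_neg_piS (-s) x⟩

/-- Bracket-compatibility is symmetric in the two arguments, by skew-symmetry; this halves the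
number of pairs of generators to be treated. -/
theorem piS_bracket_symm {s : ℤ} {x y : Aff}
    (h : piS s (affBracket y x) = affBracket (piS s y) (piS s x)) :
    piS s (affBracket x y) = affBracket (piS s x) (piS s y) := by
  have hneg (z : Aff) : piS s (-z) = -piS s z := by
    refine eq_neg_of_add_eq_zero_left ?_
    rw [← piS_add, neg_add_cancel]
    exact piS_C s 0
  rw [affBracket_skew x y, hneg, h, ← affBracket_skew]

theorem piS_bracket_EE (s n m : ℤ) (a b : ℂ) :
    let x : Aff := (Finsupp.single n (a, 0, 0), 0)
    let y : Aff := (Finsupp.single m (b, 0, 0), 0)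
    piS s (affBracket x y) = affBracket (piS s x) (piS s y) := by
  have hB : sl2Bracket (a, 0, 0) (b, 0, 0) = 0 := by simp [sl2Bracket]
  have hQ : sl2Form (a, 0, 0) (b, 0, 0) = 0 := by simp [sl2Form]
  simp only [piS_E, affBracket_single, hB, hQ, Finsupp.single_zero, mul_zero, ite_self, piS_C]

theorem piS_bracket_FF (s n m : ℤ) (a b : ℂ) :
    let x : Aff := (Finsupp.single n (0, 0, a), 0)
    let y : Aff := (Finsupp.single m (0, 0, b), 0)
    piS s (affBracket x y) = affBracket (piS s x) (piS s y) := by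
  have hB : sl2Bracket (0, 0, a) (0, 0, b) = 0 := by simp [sl2Bracket]
  have hQ : sl2Form (0, 0, a) (0, 0, b) = 0 := by simp [sl2Form]
  simp only [piS_F, affBracket_single, hB, hQ, Finsupp.single_zero, mul_zero, ite_self, piS_C]

theorem piS_bracket_HH (s n m : ℤ) (a b : ℂ) :
    let x : Aff := (Finsupp.single n (0, a, 0), 0)
    let y : Aff := (Finsupp.single m (0, b, 0), 0)
    piS s (affBracket x y) = affBracket (piS s x) (piS s y) := by
  have hB : sl2Bracket (0, a, 0) (0, b, 0) = 0 := by simp [sl2Bracket]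
  simp only [piS_H, affBracket_single, hB, Finsupp.single_zero, piS_C]

theorem piS_bracket_HE (s n m : ℤ) (a b : ℂ) :
    let x : Aff := (Finsupp.single n (0, a, 0), 0)
    let y : Aff := (Finsupp.single m (b, 0, 0), 0)
    piS s (affBracket x y) = affBracket (piS s x) (piS s y) := by
  have hB : sl2Bracket (0, a, 0) (b, 0, 0) = (2 * (a * b), 0, 0) := by simp [sl2Bracket]
  have hQ : sl2Form (0, a, 0) (b, 0, 0) = 0 := by simp [sl2Form]
  simp only [piS_H, piS_E, affBracket_single, hB, hQ, mul_zero, ite_self, add_sub_assoc]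

theorem piS_bracket_HF (s n m : ℤ) (a b : ℂ) :
    let x : Aff := (Finsupp.single n (0, a, 0), 0)
    let y : Aff := (Finsupp.single m (0, 0, b), 0)
    piS s (affBracket x y) = affBracket (piS s x) (piS s y) := by
  have hB : sl2Bracket (0, a, 0) (0, 0, b) = (0, 0, -(2 * (a * b))) := by simp [sl2Bracket]
  have hQ : sl2Form (0, a, 0) (0, 0, b) = 0 := by simp [sl2Form]
  simp only [piS_H, piS_F, affBracket_single, hB, hQ, mul_zero, ite_self, add_assoc]

/-- The one pair of generators where the central term of π_s(h(0)) intervenes: it compensates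
the change of the cocycle value from n to n − s. -/
theorem piS_bracket_EF (s n m : ℤ) (a b : ℂ) :
    let x : Aff := (Finsupp.single n (a, 0, 0), 0)
    let y : Aff := (Finsupp.single m (0, 0, b), 0)
    piS s (affBracket x y) = affBracket (piS s x) (piS s y) := by
  have hB : sl2Bracket (a, 0, 0) (0, 0, b) = (0, a * b, 0) := by simp [sl2Bracket]
  have hQ : sl2Form (a, 0, 0) (0, 0, b) = a * b := by simp [sl2Form]
  simp only [piS_E, piS_F, affBracket_single, hB, hQ, piS_H', sub_add_add_cancel]
  refine Prod.ext rfl ?_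
  dsimp only
  split_ifs
  · push_cast
    ring
  · simp

theorem piS_bracket (s : ℤ) (x y : Aff) :
    piS s (affBracket x y) = affBracket (piS s x) (piS s y) := by
  have hz : piS s 0 = 0 := piS_C s 0
  induction x using aff_induction with
  | hadd x x' h h' => simp only [affBracket_add_left, piS_add, h, h']
  | hC a => rw [piS_C, affBracket_central_left, affBracket_central_left, hz]
  | hE n a =>
    induction y using aff_induction with
    | hadd y y' h h' => simp only [affBracket_add_right, piS_add, h, h']
    | hC b => rw [piS_C, affBracket_central_right, affBracket_central_right, hz]
    | hE m b => exact piS_bracket_EE s n m a b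
    | hH m b => exact piS_bracket_symm (piS_bracket_HE s m n b a)
    | hF m b => exact piS_bracket_EF s n m a b
  | hH n a =>
    induction y using aff_induction with
    | hadd y y' h h' => simp only [affBracket_add_right, piS_add, h, h']
    | hC b => rw [piS_C, affBracket_central_right, affBracket_central_right, hz]
    | hE m b => exact piS_bracket_HE s n m a b
    | hH m b => exact piS_bracket_HH s n m a b
    | hF m b => exact piS_bracket_HF s n m a b
  | hF n a =>
    induction y using aff_induction with
    | hadd y y' h h' => simp only [affBracket_add_right, piS_add, h, h']
    | hC b => rw [piS_C, affBracket_central_right, affBracket_central_right, hz]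
    | hE m b => exact piS_bracket_symm (piS_bracket_EF s m n b a)
    | hH m b => exact piS_bracket_symm (piS_bracket_HF s m n b a)
    | hF m b => exact piS_bracket_FF s n m a b

/-- For every integer s: the bracket `affBracket` makes ĝ into a Lie algebra
    (it is ℂ-bilinear, alternating, and satisfies the Jacobi/Leibniz identity),
    the ℂ-linear map π_s is determined by π_s(e(n)) = e(n−s), π_s(f(n)) = f(n+s),
    π_s(h(n)) = h(n) − s·δ_{n,0}·c, π_s(c) = c, and π_s is an automorphism of the
    Lie algebra ĝ: it is ℂ-linear, bijective, and preserves the bracket. -/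
theorem stmt3 (s : ℤ) :
    -- ĝ is a Lie algebra under `affBracket`:
    (∀ x y z : Aff, affBracket (x + y) z = affBracket x z + affBracket y z) ∧
    (∀ x y z : Aff, affBracket x (y + z) = affBracket x y + affBracket x z) ∧
    (∀ (a : ℂ) (x y : Aff), affBracket (a • x) y = a • affBracket x y) ∧
    (∀ (a : ℂ) (x y : Aff), affBracket x (a • y) = a • affBracket x y) ∧
    (∀ x : Aff, affBracket x x = 0) ∧
    (∀ x y z : Aff,
      affBracket x (affBracket y z)
        = affBracket (affBracket x y) z + affBracket y (affBracket x z)) ∧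
    -- π_s is determined by the prescribed values on e(n), f(n), h(n), c:
    (∀ n : ℤ, piS s (atE n) = atE (n - s)) ∧
    (∀ n : ℤ, piS s (atF n) = atF (n + s)) ∧
    (∀ n : ℤ, piS s (atH n) = atH n - (if n = 0 then (s : ℂ) else 0) • cc) ∧
    piS s cc = cc ∧
    -- π_s is an automorphism of the Lie algebra ĝ:
    (∀ x y : Aff, piS s (x + y) = piS s x + piS s y) ∧
    (∀ (a : ℂ) (x : Aff), piS s (a • x) = a • piS s x) ∧
    Function.Bijective (piS s) ∧
    (∀ x y : Aff, piS s (affBracket x y) = affBracket (piS s x) (piS s y)) := by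
  refine ⟨affBracket_add_left, affBracket_add_right, affBracket_smul_left, affBracket_smul_right,
    affBracket_self, affBracket_jacobi, fun n => piS_E s n 1, fun n => piS_F s n 1, fun n => ?_,
    piS_C s 1, piS_add s, piS_smul s, piS_bijective s, piS_bracket s⟩
  rw [atH, piS_H, cc]
  split_ifs <;> simp
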